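/- Every cubic pseudo-graph G admits an S_4-coloring, where S_4 is the pseudo-graph on 4 vertices consisting of a central vertex joined by three edges a, b, c to three vertices, each of which carries a loop (loops a', b', c'). Here an S_4-coloring assigns to each edge of G an edge of S_4 (loops receive two colors in the sense that a loop used at a vertex of G appears twice in its neighborhood), such that for every vertex x of G, the multiset of colors on ∂_G(x) equals the multiset of edges at some vertex of S_4 (i.e., either {a,b,c} at the central vertex, or {d, d', d'} at a leaf vertex with d ∈ {a,b,c}). -/

import Mathlib

open scoped Classical

/-- A finite undirected multigraph (possibly with loops and parallel edges),
given by a vertex type, an edge type, and an endpoints map. -/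
structure Multigraph where
  V : Type
  E : Type
  [fintV : Fintype V]
  [fintE : Fintype E]
  [decV : DecidableEq V]
  [decE : DecidableEq E]
  ends : E → Sym2 V

namespace Multigraph

attribute [instance] Multigraph.fintV Multigraph.fintE Multigraph.decV Multigraph.decE

variable (G : Multigraph)

/-- The number of times `v` occurs as an endpoint of `e` (2 for a loop at `v`). -/
def incCount (v : G.V) (e : G.E) : ℕ :=
  if G.ends e = Sym2.diag v then 2 else if v ∈ G.ends e then 1 else 0

/-- Degree of a vertex (a loop contributes 2). -/
def degree (v : G.V) : ℕ := ∑ e : G.E, G.incCount v e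

/-- The set `∂_G(v)` of edges incident to `v`. -/
def star (v : G.V) : Finset G.E := Finset.univ.filter fun e => v ∈ G.ends e

/-- No loops. -/
def Loopless : Prop := ∀ e : G.E, ¬ (G.ends e).IsDiag

/-- A cubic graph: loopless and 3-regular (parallel edges allowed). -/
def Cubic : Prop := G.Loopless ∧ ∀ v : G.V, G.degree v = 3

/-- A cubic pseudo-graph: 3-regular, loops and parallel edges allowed. -/
def CubicPseudo : Prop := ∀ v : G.V, G.degree v = 3

/-- A simple graph: no loops and no parallel edges. -/
def Simple : Prop := G.Loopless ∧ ∀ e e' : G.E, G.ends e = G.ends e' → e = e'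

/-- Two edges are adjacent if they are distinct and share an endpoint. -/
def EdgeAdj (e e' : G.E) : Prop :=
  e ≠ e' ∧ ∃ v : G.V, v ∈ G.ends e ∧ v ∈ G.ends e'

/-- A matching: a set of pairwise non-adjacent edges. -/
def IsMatching (M : Set G.E) : Prop :=
  ∀ e ∈ M, ∀ e' ∈ M, e ≠ e' → ¬ ∃ v : G.V, v ∈ G.ends e ∧ v ∈ G.ends e'

/-- A perfect matching: a matching covering every vertex. -/
def IsPerfectMatching (M : Set G.E) : Prop :=
  G.IsMatching M ∧ ∀ v : G.V, ∃ e ∈ M, v ∈ G.ends e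

/-- Degree of `v` within the spanning subgraph with edge set `A`. -/
noncomputable def degIn (A : Set G.E) (v : G.V) : ℕ :=
  ∑ e : G.E, if e ∈ A then G.incCount v e else 0

/-- `A` is the edge set of a `k`-factor: a spanning `k`-regular subgraph. -/
def IsKFactor (k : ℕ) (A : Set G.E) : Prop := ∀ v : G.V, G.degIn A v = k

/-- `A` is the edge set of an even subgraph. -/
def EvenSubgraph (A : Set G.E) : Prop := ∀ v : G.V, Even (G.degIn A v)

/-- Reachability using only edges from `A`. -/
def Reach (A : Set G.E) : G.V → G.V → Prop :=
  Relation.ReflTransGen fun a b => ∃ e ∈ A, G.ends e = s(a, b)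

/-- Connectedness. -/
def Connected : Prop := ∀ u v : G.V, G.Reach Set.univ u v

/-- A bridge: an edge whose removal disconnects its endpoints. -/
def IsBridge (e : G.E) : Prop :=
  ∀ u w : G.V, G.ends e = s(u, w) → ¬ G.Reach {e' | e' ≠ e} u w

/-- The chromatic index: least number of colors of a proper edge coloring. -/
noncomputable def chromaticIndex : ℕ :=
  sInf {n | ∃ c : G.E → Fin n, ∀ e e', G.EdgeAdj e e' → c e ≠ c e'}

/-- A triangle on distinct vertices `u, v, w` with edges `e₁, e₂, e₃`. -/
def IsTriangle (e₁ e₂ e₃ : G.E) (u v w : G.V) : Prop :=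
  u ≠ v ∧ v ≠ w ∧ u ≠ w ∧
    G.ends e₁ = s(u, v) ∧ G.ends e₂ = s(v, w) ∧ G.ends e₃ = s(u, w)

/-- Triangle-freeness. -/
def TriangleFree : Prop :=
  ¬ ∃ (e₁ e₂ e₃ : G.E) (u v w : G.V), G.IsTriangle e₁ e₂ e₃ u v w

/-- An isomorphism of multigraphs. -/
structure Iso (G H : Multigraph) where
  vEquiv : G.V ≃ H.V
  eEquiv : G.E ≃ H.E
  ends_map : ∀ e : G.E, H.ends (eEquiv e) = (G.ends e).map vEquiv

/-- `G` and `H` are isomorphic. -/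
def IsIsomorphicTo (G H : Multigraph) : Prop := Nonempty (Iso G H)

/-- An `H`-coloring of `G`: `f(∂_G(x)) = ∂_H(y)` for every vertex `x` of `G`,
some vertex `y` of `H`. -/
def IsHColoring (G H : Multigraph) (f : G.E → H.E) : Prop :=
  ∀ x : G.V, ∃ y : H.V, (G.star x).image f = H.star y

/-- The set `V(f)` of vertices of `G` satisfying the `H`-coloring condition under `f`. -/
def colVerts (G H : Multigraph) (f : G.E → H.E) : Set G.V :=
  {x : G.V | ∃ y : H.V, (G.star x).image f = H.star y}

/-- The incidence multiset of a vertex: each incident edge with its multiplicity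
(a loop occurs twice). -/
noncomputable def incMultiset (v : G.V) : Multiset G.E :=
  ∑ e : G.E, (G.incCount v e) • ({e} : Multiset G.E)

end Multigraph

/-- The Petersen graph. -/
def Petersen : Multigraph where
  V := Fin 10
  E := {p : Sym2 (Fin 10) //
    p ∈ ({s(0,1), s(1,2), s(2,3), s(3,4), s(4,0),
          s(0,5), s(1,6), s(2,7), s(3,8), s(4,9),
          s(5,7), s(7,9), s(9,6), s(6,8), s(8,5)} : Finset (Sym2 (Fin 10)))}
  ends := Subtype.val

/-- The Sylvester graph `S` on 10 vertices: a central vertex 0 joined by three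
bridges to three end-blocks; each end-block is a 3-vertex multigraph whose two
non-root vertices are joined by a pair of parallel edges. -/
def SylvesterS : Multigraph where
  V := Fin 10
  E := Fin 15
  ends := ![s(0,1), s(1,2), s(1,3), s(2,3), s(2,3),
            s(0,4), s(4,5), s(4,6), s(5,6), s(5,6),
            s(0,7), s(7,8), s(7,9), s(8,9), s(8,9)]

/-- The Sylvester simple graph `S₁₆` on 16 vertices: central vertex 0 joined by
bridges to three 5-vertex end-blocks with edges
(v1,v2),(v1,v3),(v1,v4),(v2,v3),(v2,v4),(v3,v5),(v4,v5). -/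
def Sylvester16 : Multigraph where
  V := Fin 16
  E := {p : Sym2 (Fin 16) //
    p ∈ ({s(1,2), s(1,3), s(1,4), s(2,3), s(2,4), s(3,5), s(4,5), s(0,5),
          s(6,7), s(6,8), s(6,9), s(7,8), s(7,9), s(8,10), s(9,10), s(0,10),
          s(11,12), s(11,13), s(11,14), s(12,13), s(12,14), s(13,15), s(14,15),
          s(0,15)} : Finset (Sym2 (Fin 16)))}
  ends := Subtype.val

/-- The graph `S'` on 10 vertices: two 5-vertex blocks, each consisting of a
triangle v1v2v3 together with edges (v1,v4),(v2,v4),(v3,v5),(v4,v5), joined by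
a bridge between the two degree-2 vertices. -/
def Sprime : Multigraph where
  V := Fin 10
  E := {p : Sym2 (Fin 10) //
    p ∈ ({s(0,1), s(0,2), s(1,2), s(0,3), s(1,3), s(2,4), s(3,4),
          s(5,6), s(5,7), s(6,7), s(5,8), s(6,8), s(7,9), s(8,9),
          s(4,9)} : Finset (Sym2 (Fin 10)))}
  ends := Subtype.val

/-- The Sylvester pseudo-graph `S₄` on 4 vertices: a central vertex 0 joined to
vertices 1, 2, 3 (edges `a = 0`, `b = 1`, `c = 2`), each of which carries a loop
(`a' = 3`, `b' = 4`, `c' = 5`). -/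
def S4 : Multigraph where
  V := Fin 4
  E := Fin 6
  ends := ![s(0,1), s(0,2), s(0,3), s(1,1), s(2,2), s(3,3)]

namespace Multigraph

variable (G : Multigraph)

/-- `e` is a bridge of the spanning subgraph with edge set `A`. -/
def BridgeIn (A : Set G.E) (e : G.E) : Prop :=
  ∀ u w : G.V, G.ends e = s(u, w) → ¬ G.Reach {e' | e' ∈ A ∧ e' ≠ e} u w

theorem bridgeIn_univ (e : G.E) : G.BridgeIn Set.univ e ↔ G.IsBridge e := by
  simp [BridgeIn, IsBridge]

variable {G}

theorem Reach.symm {A : Set G.E} {u w : G.V} (h : G.Reach A u w) : G.Reach A w u := by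
  induction h with
  | refl => exact Relation.ReflTransGen.refl
  | tail _ h ih =>
    obtain ⟨e, he, hends⟩ := h
    exact Relation.ReflTransGen.head ⟨e, he, by rw [hends, Sym2.eq_swap]⟩ ih

theorem Reach.mono {A B : Set G.E} (hAB : A ⊆ B) {u w : G.V} (h : G.Reach A u w) :
    G.Reach B u w :=
  Relation.ReflTransGen.mono (fun _ _ ⟨e, he, hends⟩ => ⟨e, hAB he, hends⟩) _ _ h

theorem exists_last_edge {A : Set G.E} {v w : G.V} (h : G.Reach A w v) (hw : w ≠ v) :
    ∃ e ∈ A, ∃ u, G.ends e = s(u, v) ∧ G.Reach {e' | e' ∈ A ∧ v ∉ G.ends e'} w u := by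
  induction h using Relation.ReflTransGen.head_induction_on with
  | refl => exact absurd rfl hw
  | head h _ ih =>
    rename_i a c _
    obtain ⟨e, he, hends⟩ := h
    by_cases hc : c = v
    · subst hc
      exact ⟨e, he, a, hends, Relation.ReflTransGen.refl⟩
    · obtain ⟨e₁, he₁, u, hu, hr⟩ := ih hc
      refine ⟨e₁, he₁, u, hu, Relation.ReflTransGen.head ⟨e, ⟨he, ?_⟩, hends⟩ hr⟩
      rw [hends, Sym2.mem_iff]
      rintro (h | h)
      · exact hw h.symm
      · exact hc h.symm

/-- A non-bridge at `v` is accompanied by a second non-bridge at `v`. -/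
theorem exists_other_nonbridge {A : Set G.E} {e : G.E} {v : G.V} (heA : e ∈ A)
    (hv : v ∈ G.ends e) (hloop : ¬ (G.ends e).IsDiag) (he : ¬ G.BridgeIn A e) :
    ∃ e₁ ∈ A, e₁ ≠ e ∧ v ∈ G.ends e₁ ∧ ¬ G.BridgeIn A e₁ := by
  obtain ⟨w, hw⟩ := hv
  have hvw : w ≠ v := by
    rintro rfl
    exact hloop (by rw [hw]; exact rfl)
  have hr : G.Reach {e' | e' ∈ A ∧ e' ≠ e} w v := by
    unfold BridgeIn at he
    push Not at he
    obtain ⟨a, b, hab, hr⟩ := he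
    rw [hw, Sym2.eq_iff] at hab
    rcases hab with ⟨rfl, rfl⟩ | ⟨rfl, rfl⟩
    · exact hr.symm
    · exact hr
  obtain ⟨e₁, ⟨he₁A, he₁⟩, u, hu, hwu⟩ := exists_last_edge hr hvw
  refine ⟨e₁, he₁A, he₁, by simp [hu], fun hb => hb u v hu ?_⟩
  refine Reach.symm (Relation.ReflTransGen.head ⟨e, ⟨heA, he₁.symm⟩, hw⟩ ?_)
  refine Reach.mono ?_ hwu
  rintro e' ⟨⟨h₁, _⟩, h₂⟩
  refine ⟨h₁, ?_⟩
  rintro rfl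
  exact h₂ (by simp [hu])

/-- Values prescribed on half-edges can be made to agree on every edge by shifting them at each
vertex, provided that they already agree on the non-bridges. -/
theorem exists_potential {Γ : Type*} [AddCommGroup Γ] (A : Set G.E) (t : G.V → G.E → Γ)
    (ht : ∀ e ∈ A, ¬ G.BridgeIn A e → ∀ u w, G.ends e = s(u, w) → t u e = t w e) :
    ∃ (x : G.V → Γ) (L : G.E → Γ), ∀ e ∈ A, ∀ v ∈ G.ends e, L e = x v + t v e := by
  suffices h : ∀ T : Finset G.E, ∃ x : G.V → Γ, ∀ e ∈ A, (e ∈ T ∨ ¬ G.BridgeIn A e) →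
      ∀ u w, G.ends e = s(u, w) → x u + t u e = x w + t w e by
    obtain ⟨x, hx⟩ := h Finset.univ
    refine ⟨x, fun e => x (G.ends e).out.1 + t (G.ends e).out.1 e, ?_⟩
    rintro e he v ⟨w, hw⟩
    have h₁ := hx e he (Or.inl (Finset.mem_univ e)) v w hw
    have h₂ : (G.ends e).out.1 ∈ G.ends e := Sym2.out_fst_mem _
    beta_reduce
    generalize (G.ends e).out.1 = a at h₂ ⊢
    rw [hw, Sym2.mem_iff] at h₂
    rcases h₂ with rfl | rfl
    · rfl
    · exact h₁.symm
  intro T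
  induction T using Finset.induction_on with
  | empty =>
    exact ⟨0, fun e he h u w hends => by
      simpa using ht e he (by simpa using h) u w hends⟩
  | insert e₀ T _ ih =>
    obtain ⟨x, hx⟩ := ih
    by_cases h₀ : e₀ ∈ A ∧ G.BridgeIn A e₀
    swap
    · refine ⟨x, fun e he h => hx e he ?_⟩
      rcases h with h | h
      · rcases Finset.mem_insert.1 h with rfl | h
        · exact Or.inr fun hb => h₀ ⟨he, hb⟩
        · exact Or.inl h
      · exact Or.inr h
    obtain ⟨-, hb⟩ := h₀
    obtain ⟨u₀, w₀, h₀⟩ : ∃ u w, G.ends e₀ = s(u, w) := by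
      induction h : G.ends e₀ with
      | _ u w => exact ⟨u, w, rfl⟩
    have hnr := hb u₀ w₀ h₀
    set R := G.Reach {e' | e' ∈ A ∧ e' ≠ e₀} u₀
    have hR : R u₀ := Relation.ReflTransGen.refl
    refine ⟨fun v => if R v then x v + (x w₀ + t w₀ e₀ - x u₀ - t u₀ e₀) else x v, ?_⟩
    intro e he h u w hends
    by_cases hee : e = e₀
    · subst hee
      rw [h₀, Sym2.eq_iff] at hends
      rcases hends with ⟨rfl, rfl⟩ | ⟨rfl, rfl⟩ <;> simp only [hR, hnr, if_true, if_false] <;> abel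
    · have hiff : R u ↔ R w :=
        ⟨fun h => h.tail ⟨e, ⟨he, hee⟩, hends⟩,
          fun h => h.tail ⟨e, ⟨he, hee⟩, by rw [hends, Sym2.eq_swap]⟩⟩
      have := hx e he (by simpa [hee] using h) u w hends
      by_cases hu : R u
      · simp only [hu, hiff.1 hu, if_true]
        rw [add_right_comm, this, add_right_comm]
      · simpa only [hu, mt hiff.2 hu, if_false] using this

/-- The bridges of a subgraph of maximum degree two can be properly 2-coloured. -/
theorem exists_bridge_two_coloring (A : Set G.E)
    (hdeg : ∀ v, ((G.star v).filter (· ∈ A)).card ≤ 2) :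
    ∃ L : G.E → ZMod 2, ∀ v, ∀ e ∈ A, ∀ e' ∈ A, v ∈ G.ends e → v ∈ G.ends e' →
      G.BridgeIn A e → G.BridgeIn A e' → e ≠ e' → L e ≠ L e' := by
  have hinj : ∀ v, ∃ t : G.E → ZMod 2, ∀ e ∈ A, ∀ e' ∈ A, v ∈ G.ends e → v ∈ G.ends e' →
      e ≠ e' → t e ≠ t e' := by
    intro v
    by_cases h : ∃ e₁ ∈ A, v ∈ G.ends e₁
    · obtain ⟨e₁, h₁, hv₁⟩ := h
      refine ⟨fun e => if e = e₁ then 0 else 1, fun e he e' he' hv hv' hne => ?_⟩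
      by_cases he₁ : e = e₁
      · have : e' ≠ e₁ := fun h => hne (he₁.trans h.symm)
        simp [he₁, this]
      by_cases he₁' : e' = e₁
      · simp [he₁, he₁']
      exfalso
      refine absurd (hdeg v) (not_le.2 (Finset.two_lt_card.2
        ⟨e, ?_, e', ?_, e₁, ?_, hne, he₁, he₁'⟩)) <;> simp [star, *]
    · push Not at h
      exact ⟨0, fun e he _ _ hv => absurd hv (h e he)⟩
  choose t ht using hinj
  obtain ⟨x, L, hL⟩ := exists_potential A (fun v e => if G.BridgeIn A e then t v e else 0)
    (fun e _ hb u w _ => by simp [hb])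
  refine ⟨L, fun v e he e' he' hv hv' hb hb' hne => ?_⟩
  rw [hL e he v hv, hL e' he' v hv', if_pos hb, if_pos hb']
  exact fun h => ht v e he e' he' hv hv' hne (add_left_cancel h)

theorem incCount_eq {e : G.E} {u w : G.V} (h : G.ends e = s(u, w)) (v : G.V) :
    G.incCount v e = (if v = u then 1 else 0) + (if v = w then 1 else 0) := by
  simp only [incCount, h, Sym2.diag, Sym2.eq_iff, Sym2.mem_iff]
  by_cases h₁ : v = u <;> by_cases h₂ : v = w <;> simp [h₁, h₂, eq_comm] <;> grind

/-- The edges with exactly one end in `C`. -/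
noncomputable def boundary (C : Finset G.V) : Finset G.E :=
  Finset.univ.filter fun e => ∃ u ∈ C, ∃ w ∉ C, G.ends e = s(u, w)

theorem odd_card_boundary (hG : G.CubicPseudo) (C : Finset G.V) :
    Odd (boundary C).card ↔ Odd C.card := by
  have hcount : C.card * 3 = ∑ e : G.E, ∑ v ∈ C, G.incCount v e := by
    rw [Finset.sum_comm]
    exact (Finset.sum_const_nat fun v _ => hG v).symm
  have hmod : ∀ e : G.E, (∑ v ∈ C, G.incCount v e) % 2
      = (if ∃ u ∈ C, ∃ w ∉ C, G.ends e = s(u, w) then 1 else 0) := by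
    intro e
    induction h : G.ends e with
    | _ a b =>
      simp only [incCount_eq h, Finset.sum_add_distrib, Finset.sum_ite_eq']
      by_cases ha : a ∈ C <;> by_cases hb : b ∈ C <;> simp [ha, hb] <;> grind
  have h₂ : C.card * 3 % 2 = (boundary C).card % 2 := by
    rw [hcount, Finset.sum_nat_mod, Finset.sum_congr rfl fun e _ => hmod e, boundary,
      Finset.card_filter]
  rw [Nat.odd_iff, Nat.odd_iff]
  omega

theorem isBridge_of_boundary_eq_singleton {C : Finset G.V} {e : G.E} (h : boundary C = {e}) :
    G.IsBridge e := by
  have key : ∀ u ∈ C, ∀ w ∉ C, ¬ G.Reach {e' | e' ≠ e} u w := by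
    intro u hu w hw hr
    apply hw
    clear hw
    induction hr with
    | refl => exact hu
    | tail _ h₁ ih =>
      rename_i b c _
      obtain ⟨e', he', hends⟩ := h₁
      by_contra hc
      have : e' ∈ boundary C := by simpa [boundary] using ⟨b, ih, c, hc, hends⟩
      rw [h, Finset.mem_singleton] at this
      exact he' this
  have he : e ∈ boundary C := by simp [h]
  obtain ⟨u, hu, w, hw, hends⟩ := by simpa [boundary] using he
  intro a b hab hr
  rw [hends, Sym2.eq_iff] at hab
  rcases hab with ⟨rfl, rfl⟩ | ⟨rfl, rfl⟩
  · exact key _ hu _ hw hr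
  · exact key _ hu _ hw hr.symm

/-- Vertices incident with neither a bridge nor a loop. -/
def Inner (v : G.V) : Prop := ∀ e, v ∈ G.ends e → ¬ G.IsBridge e ∧ ¬ (G.ends e).IsDiag

theorem even_card_vertices (hG : G.CubicPseudo) : Even (Fintype.card G.V) := by
  have h := odd_card_boundary hG Finset.univ
  have h₀ : boundary (Finset.univ : Finset G.V) = ∅ := by simp [boundary]
  rw [h₀, Finset.card_univ] at h
  simpa using h

theorem three_le_card_boundary (hG : G.CubicPseudo) {C : Finset G.V} (hodd : Odd C.card)
    (hC : ∀ v ∈ C, G.Inner v) : 3 ≤ (boundary C).card := by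
  have h₁ := (odd_card_boundary hG C).2 hodd
  have h₂ : (boundary C).card ≠ 1 := by
    intro h
    obtain ⟨e, he⟩ := Finset.card_eq_one.1 h
    have hmem : e ∈ boundary C := by simp [he]
    obtain ⟨u, hu, w, hw, hends⟩ := by simpa [boundary] using hmem
    exact (hC u hu e (by simp [hends])).1 (isBridge_of_boundary_eq_singleton he)
  obtain ⟨k, hk⟩ := h₁
  omega

theorem card_star_le (hG : G.CubicPseudo) (v : G.V) : (G.star v).card ≤ 3 := by
  rw [← hG v, degree, star, Finset.card_filter]
  refine Finset.sum_le_sum fun e _ => ?_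
  unfold incCount
  split_ifs <;> simp_all

/-- The simple graph of non-bridges, with a clique added on the vertices incident with a bridge
or a loop. -/
def closureGraph (G : Multigraph) : SimpleGraph G.V where
  Adj u w := u ≠ w ∧ ((¬ G.Inner u ∧ ¬ G.Inner w) ∨ ∃ e, ¬ G.IsBridge e ∧ G.ends e = s(u, w))
  symm := ⟨fun u w ⟨h, h'⟩ => ⟨h.symm, h'.imp And.symm
    fun ⟨e, he, hends⟩ => ⟨e, he, by rw [hends, Sym2.eq_swap]⟩⟩⟩
  loopless := ⟨fun _ h => h.1 rfl⟩

theorem exists_perfect_matching_closureGraph (hG : G.CubicPseudo) :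
    ∃ M : G.closureGraph.Subgraph, M.IsPerfectMatching := by
  rw [SimpleGraph.tutte]
  intro S hS
  unfold SimpleGraph.IsTutteViolator at hS
  set K := ((⊤ : G.closureGraph.Subgraph).deleteVerts S).coe
  have hverts : ∀ v : G.V, v ∈ ((⊤ : G.closureGraph.Subgraph).deleteVerts S).verts ↔ v ∉ S := by
    simp
  let supp : K.ConnectedComponent → Finset G.V := fun c => (Subtype.val '' c.supp).toFinset
  have mem_supp : ∀ c v, v ∈ supp c ↔ ∃ h : v ∉ S,
      K.connectedComponentMk ⟨v, (hverts v).2 h⟩ = c := by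
    intro c v
    simp [supp]
  have card_supp : ∀ c, (supp c).card = c.supp.ncard := by
    intro c
    rw [← Set.ncard_eq_toFinset_card', Set.ncard_image_of_injective _ Subtype.val_injective]
  have adj : ∀ c, ∀ u ∈ supp c, ∀ w, w ∉ S → G.closureGraph.Adj u w → w ∈ supp c := by
    intro c u hu w hw huw
    obtain ⟨huS, rfl⟩ := (mem_supp c u).1 hu
    refine (mem_supp _ w).2 ⟨hw, ?_⟩
    rw [SimpleGraph.ConnectedComponent.eq]
    refine (SimpleGraph.Adj.reachable ?_).symm
    simp [K, huS, hw, huw]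
  let Q : Finset K.ConnectedComponent :=
    {c | Odd c.supp.ncard ∧ ∀ v ∈ supp c, G.Inner v}
  let R : Finset K.ConnectedComponent := {c | ∃ v ∈ supp c, ¬ G.Inner v}
  have hR : R.card ≤ 1 := by
    rw [Finset.card_le_one]
    intro c hc d hd
    obtain ⟨u, hu, hu'⟩ := (Finset.mem_filter.1 hc).2
    obtain ⟨w, hw, hw'⟩ := (Finset.mem_filter.1 hd).2
    have hwS := ((mem_supp d w).1 hw).1
    have hwc : w ∈ supp c := by
      by_cases huw : u = w
      · exact huw ▸ hu
      · exact adj c u hu w hwS ⟨huw, Or.inl ⟨hu', hw'⟩⟩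
    obtain ⟨_, rfl⟩ := (mem_supp c w).1 hwc
    obtain ⟨_, rfl⟩ := (mem_supp d w).1 hw
    rfl
  have hodd : K.oddComponents.ncard ≤ Q.card + R.card := by
    refine le_trans ?_ (Finset.card_union_le Q R)
    rw [← Set.ncard_coe_finset]
    refine Set.ncard_le_ncard (fun c hc => ?_) (Set.toFinite _)
    by_cases h : ∀ v ∈ supp c, G.Inner v
    · exact Finset.mem_union_left _ (Finset.mem_filter.2 ⟨Finset.mem_univ c, hc, h⟩)
    · push Not at h
      exact Finset.mem_union_right _ (Finset.mem_filter.2 ⟨Finset.mem_univ c, h⟩)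
  have bdS : ∀ c ∈ Q, ∀ e ∈ boundary (supp c), ∃ u ∈ supp c, ∃ w ∈ S, G.ends e = s(u, w) := by
    intro c hc e he
    obtain ⟨u, hu, w, hw, hends⟩ := (Finset.mem_filter.1 he).2
    refine ⟨u, hu, w, ?_, hends⟩
    by_contra hwS
    refine hw (adj c u hu w hwS ⟨?_, Or.inr ⟨e, ?_, hends⟩⟩)
    · rintro rfl
      exact hw hu
    · exact ((Finset.mem_filter.1 hc).2.2 u hu e (by simp [hends])).1
  have hQ : Q.card * 3 ≤ S.toFinset.card * 3 := by
    calc Q.card * 3 ≤ (Q.biUnion fun c => boundary (supp c)).card := by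
          rw [Finset.card_biUnion]
          · rw [← smul_eq_mul]
            refine Finset.card_nsmul_le_sum _ _ _ fun c hc => ?_
            obtain ⟨-, h₁, h₂⟩ := Finset.mem_filter.1 hc
            exact three_le_card_boundary hG (by rwa [card_supp]) h₂
          · intro c hc d hd hcd
            rw [Function.onFun, Finset.disjoint_left]
            intro e he he'
            obtain ⟨u, hu, w, hw, hends⟩ := bdS c hc e he
            obtain ⟨u', hu', w', hw', hends'⟩ := bdS d hd e he'
            obtain ⟨huS, rfl⟩ := (mem_supp c u).1 hu
            obtain ⟨huS', rfl⟩ := (mem_supp d u').1 hu'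
            rw [hends, Sym2.eq_iff] at hends'
            rcases hends' with ⟨rfl, rfl⟩ | ⟨rfl, rfl⟩
            · exact hcd rfl
            · exact huS hw'
      _ ≤ (S.toFinset.biUnion G.star).card := by
          refine Finset.card_le_card fun e he => ?_
          obtain ⟨c, hc, he⟩ := Finset.mem_biUnion.1 he
          obtain ⟨u, hu, w, hw, hends⟩ := bdS c hc e he
          exact Finset.mem_biUnion.2 ⟨w, by simpa using hw, by simp [star, hends]⟩
      _ ≤ S.toFinset.card * 3 := Finset.card_biUnion_le_card_mul _ _ _ fun v _ => card_star_le hG v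
  have hSc : S.ncard = S.toFinset.card := Set.ncard_eq_toFinset_card' S
  have hpar := SimpleGraph.odd_ncard_oddComponents (G := K)
  have hcard : Nat.card ((⊤ : G.closureGraph.Subgraph).deleteVerts S).verts + S.ncard
      = Fintype.card G.V := by
    have : ((⊤ : G.closureGraph.Subgraph).deleteVerts S).verts = Sᶜ := by
      ext v
      simp
    rw [this, Nat.card_coe_set_eq, add_comm, Set.ncard_add_ncard_compl, Nat.card_eq_fintype_card]
  have heven := even_card_vertices hG
  rw [Nat.odd_iff, Nat.odd_iff] at hpar
  rw [Nat.even_iff] at heven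
  omega

/-- Some matching covers all vertices incident with neither a bridge nor a loop. -/
theorem exists_matching (hG : G.CubicPseudo) :
    ∃ M : Set G.E,
      (∀ v, ∀ e ∈ M, ∀ e' ∈ M, v ∈ G.ends e → v ∈ G.ends e' → e = e') ∧
      ∀ v, G.Inner v → ∃ e ∈ M, v ∈ G.ends e := by
  obtain ⟨P, hP⟩ := exists_perfect_matching_closureGraph hG
  rw [SimpleGraph.Subgraph.isPerfectMatching_iff] at hP
  choose g hg using fun z : {z // ∃ e, ¬ G.IsBridge e ∧ G.ends e = z} => z.2
  refine ⟨{e | ∃ z, e = g z ∧ z.1 ∈ P.edgeSet}, ?_, ?_⟩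
  · rintro v _ ⟨z, rfl, hz⟩ _ ⟨z', rfl, hz'⟩ ⟨a, hv⟩ ⟨b, hv'⟩
    rw [(hg z).2] at hv
    rw [(hg z').2] at hv'
    rw [hv] at hz
    rw [hv'] at hz'
    have : a = b := (hP v).unique hz hz'
    rw [Subtype.ext (hv.trans (this ▸ hv'.symm))]
  · intro v hv
    obtain ⟨w, hw, -⟩ := hP v
    rcases (P.adj_sub hw).2 with h | h
    · exact absurd hv h.1
    · exact ⟨g ⟨_, h⟩, ⟨_, rfl, hw⟩, by simp [(hg _).2]⟩

theorem card_star_of_no_loop (hG : G.CubicPseudo) {v : G.V}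
    (hv : ∀ e, v ∈ G.ends e → ¬ (G.ends e).IsDiag) : (G.star v).card = 3 := by
  rw [← hG v, degree, star, Finset.card_filter]
  refine Finset.sum_congr rfl fun e _ => ?_
  unfold incCount
  split_ifs with h₁ h₂ h₃
  · exact absurd (h₂ ▸ Sym2.diag_isDiag v) (hv e h₁)
  · rfl
  · simp_all [Sym2.diag]
  · rfl

theorem star_of_loop (hG : G.CubicPseudo) {v : G.V} {e : G.E} (hv : v ∈ G.ends e)
    (he : (G.ends e).IsDiag) :
    ∃ e₁, e₁ ≠ e ∧ G.star v = {e, e₁} ∧ ¬ (G.ends e₁).IsDiag := by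
  have hdiag : ∀ e, v ∈ G.ends e → (G.ends e).IsDiag → G.incCount v e = 2 := by
    intro e hv he
    obtain ⟨w, hw⟩ := hv
    rw [hw, Sym2.mk_isDiag_iff] at he
    subst he
    exact if_pos hw
  have hsum := hG v
  rw [degree, ← Finset.add_sum_erase _ _ (Finset.mem_univ e), hdiag e hv he] at hsum
  have hsum' : ∑ e' ∈ Finset.univ.erase e, G.incCount v e' = 1 := by omega
  obtain ⟨e₁, h₁, hne⟩ := Finset.exists_ne_zero_of_sum_ne_zero (by rw [hsum']; exact one_ne_zero)
  have hne₁ := Finset.ne_of_mem_erase h₁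
  rw [← Finset.add_sum_erase _ _ h₁] at hsum'
  have hzero : ∑ e' ∈ (Finset.univ.erase e).erase e₁, G.incCount v e' = 0 := by omega
  rw [Finset.sum_eq_zero_iff] at hzero
  have hmem : ∀ e', v ∈ G.ends e' ↔ G.incCount v e' ≠ 0 := by
    intro e'
    unfold incCount
    split_ifs with h₁ h₂ <;> simp_all [Sym2.diag]
  refine ⟨e₁, hne₁, ?_, fun hd => ?_⟩
  · ext e'
    simp only [star, Finset.mem_filter, Finset.mem_univ, true_and, Finset.mem_insert,
      Finset.mem_singleton]
    constructor
    · intro h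
      by_contra! hc
      exact (hmem e').1 h (hzero e' (by simp [hc]))
    · rintro (rfl | rfl)
      · exact hv
      · exact (hmem _).2 hne
  · have := hdiag e₁ ((hmem e₁).2 hne) hd
    omega

/-- Edge labels at a vertex are consistent with an `S₄`-coloring: either three distinct letters
without primes, or one letter with primes on exactly two of the edges. -/
def LocallyColored (prime : G.E → Prop) (σ : G.E → ZMod 3) (v : G.V) : Prop :=
  ∃ e₁ e₂ e₃, e₁ ≠ e₂ ∧ e₁ ≠ e₃ ∧ e₂ ≠ e₃ ∧ G.star v = {e₁, e₂, e₃} ∧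
    ((¬ prime e₁ ∧ ¬ prime e₂ ∧ ¬ prime e₃ ∧ σ e₁ ≠ σ e₂ ∧ σ e₁ ≠ σ e₃ ∧ σ e₂ ≠ σ e₃) ∨
      (¬ prime e₁ ∧ prime e₂ ∧ prime e₃ ∧ σ e₁ = σ e₂ ∧ σ e₁ = σ e₃))

theorem exists_star_eq_insert {v : G.V} (h : (G.star v).card = 3) {e₁ : G.E}
    (he₁ : v ∈ G.ends e₁) :
    ∃ e₂ e₃, e₁ ≠ e₂ ∧ e₁ ≠ e₃ ∧ e₂ ≠ e₃ ∧ G.star v = {e₁, e₂, e₃} := by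
  have hmem : e₁ ∈ G.star v := by simpa [star] using he₁
  have h₂ : ((G.star v).erase e₁).card = 2 := by rw [Finset.card_erase_of_mem hmem, h]
  obtain ⟨e₂, e₃, hne, heq⟩ := Finset.card_eq_two.1 h₂
  have h₂ : e₂ ∈ (G.star v).erase e₁ := by simp [heq]
  have h₃ : e₃ ∈ (G.star v).erase e₁ := by simp [heq]
  exact ⟨e₂, e₃, (Finset.ne_of_mem_erase h₂).symm, (Finset.ne_of_mem_erase h₃).symm, hne, by
    rw [← heq, Finset.insert_erase hmem]⟩

/-- A letter for every non-bridge, up to a shift: matching edges and cycle edges get `0`, and path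
edges alternate between `1` and `2`. -/
noncomputable def baseLetter (N : Set G.E) (L : G.E → ZMod 2) (e : G.E) : ZMod 3 :=
  if e ∈ N ∧ G.BridgeIn N e then (if L e = 0 then 1 else 2) else 0

theorem exists_local_letters (hG : G.CubicPseudo) {M N : Set G.E} {L : G.E → ZMod 2} {v : G.V}
    (hMm : ∀ e ∈ M, ∀ e' ∈ M, v ∈ G.ends e → v ∈ G.ends e' → e = e')
    (hMc : G.Inner v → ∃ e ∈ M, v ∈ G.ends e)
    (hN : ∀ e, e ∈ N ↔ ¬ G.IsBridge e ∧ ¬ (G.ends e).IsDiag ∧ e ∉ M)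
    (hL : ∀ e ∈ N, ∀ e' ∈ N, v ∈ G.ends e → v ∈ G.ends e' →
      G.BridgeIn N e → G.BridgeIn N e' → e ≠ e' → L e ≠ L e')
    (hv : ∀ e, v ∈ G.ends e → ¬ (G.ends e).IsDiag) :
    ∃ σ : G.E → ZMod 3, (∀ e, ¬ G.IsBridge e → σ e = baseLetter N L e) ∧
      LocallyColored (fun e => e ∈ N ∧ ¬ G.BridgeIn N e) σ v := by
  have h₁ : ∃ e₁, v ∈ G.ends e₁ ∧ (G.IsBridge e₁ ∨ (G.Inner v ∧ e₁ ∈ M)) := by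
    by_cases hi : G.Inner v
    · obtain ⟨e, he, hve⟩ := hMc hi
      exact ⟨e, hve, Or.inr ⟨hi, he⟩⟩
    · unfold Inner at hi
      push Not at hi
      obtain ⟨e, hve, he⟩ := hi
      exact ⟨e, hve, Or.inl (by_contra fun hb => hv e hve (he hb))⟩
  obtain ⟨e₁, hv₁, h₁⟩ := h₁
  obtain ⟨e₂, e₃, h₁₂, h₁₃, h₂₃, hstar⟩ := exists_star_eq_insert (card_star_of_no_loop hG hv) hv₁
  have hmem : ∀ e, v ∈ G.ends e ↔ e = e₁ ∨ e = e₂ ∨ e = e₃ := by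
    intro e
    have : e ∈ G.star v ↔ v ∈ G.ends e := by simp [star]
    rw [← this, hstar, Finset.mem_insert, Finset.mem_insert, Finset.mem_singleton]
  have hv₂ := (hmem e₂).2 (by simp)
  have hv₃ := (hmem e₃).2 (by simp)
  have h₁N : e₁ ∉ N := fun h => h₁.elim ((hN _).1 h).1 fun h' => ((hN _).1 h).2.2 h'.2
  have hother : ∀ e ∈ N, v ∈ G.ends e → ¬ G.BridgeIn N e →
      ∃ e' ∈ N, e' ≠ e ∧ v ∈ G.ends e' ∧ ¬ G.BridgeIn N e' :=
    fun e he hve hb => exists_other_nonbridge he hve (hv e hve) hb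
  have hother' : ∀ e, v ∈ G.ends e → ¬ G.IsBridge e →
      ∃ e', e' ≠ e ∧ v ∈ G.ends e' ∧ ¬ G.IsBridge e' := by
    intro e hve hb
    rw [← bridgeIn_univ] at hb
    obtain ⟨e', -, h, h', h''⟩ := exists_other_nonbridge (Set.mem_univ e) hve (hv e hve) hb
    rw [bridgeIn_univ] at h''
    exact ⟨e', h, h', h''⟩
  have two_path : e₂ ∈ N → e₃ ∈ N → ∃ σ : G.E → ZMod 3,
      (∀ e, ¬ G.IsBridge e → σ e = baseLetter N L e) ∧
      LocallyColored (fun e => e ∈ N ∧ ¬ G.BridgeIn N e) σ v := by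
    intro h₂ h₃
    refine ⟨fun e => if G.IsBridge e then 0 else baseLetter N L e, fun e he => by simp [he],
      e₁, e₂, e₃, h₁₂, h₁₃, h₂₃, hstar, ?_⟩
    have hb₂ := ((hN _).1 h₂).1
    have hb₃ := ((hN _).1 h₃).1
    have hiff : G.BridgeIn N e₂ ↔ G.BridgeIn N e₃ := by
      have := hother e₂ h₂ hv₂
      have := hother e₃ h₃ hv₃
      grind
    have hne := hL e₂ h₂ e₃ h₃ hv₂ hv₃
    by_cases hb : G.BridgeIn N e₂
    · have hb' := hiff.1 hb
      replace hne := hne hb hb' h₂₃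
      left
      simp only [baseLetter, h₁N, h₂, h₃, hb, hb', hb₂, hb₃]
      revert hne
      generalize L e₂ = a
      generalize L e₃ = b
      revert a b
      simp
      decide
    · right
      have hb' := mt hiff.2 hb
      simp [baseLetter, h₁N, h₂, h₃, hb, hb']
  by_cases hb₁ : G.IsBridge e₁
  swap
  · obtain ⟨hi, h₁M⟩ := h₁.resolve_left hb₁
    refine two_path ((hN _).2 ⟨(hi _ hv₂).1, hv _ hv₂, fun h => ?_⟩)
      ((hN _).2 ⟨(hi _ hv₃).1, hv _ hv₃, fun h => ?_⟩)
    · exact h₁₂ (hMm _ h₁M _ h hv₁ hv₂)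
    · exact h₁₃ (hMm _ h₁M _ h hv₁ hv₃)
  have hiff : G.IsBridge e₂ ↔ G.IsBridge e₃ := by
    have := hother' e₂ hv₂
    have := hother' e₃ hv₃
    grind
  by_cases hb₂ : G.IsBridge e₂
  · have hb₃ := hiff.1 hb₂
    refine ⟨fun e => if G.IsBridge e then (if e = e₁ then 0 else if e = e₂ then 1 else 2)
      else baseLetter N L e, fun e he => by simp [he], e₁, e₂, e₃, h₁₂, h₁₃, h₂₃, hstar, Or.inl ?_⟩
    have h₂N : e₂ ∉ N := fun h => ((hN _).1 h).1 hb₂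
    have h₃N : e₃ ∉ N := fun h => ((hN _).1 h).1 hb₃
    simp only [h₁N, h₂N, h₃N, hb₁, hb₂, hb₃, h₁₂.symm, h₁₃.symm, h₂₃.symm, if_true, if_false,
      false_and, not_false_eq_true, true_and]
    decide
  have hb₃ := mt hiff.2 hb₂
  have path_end : ∀ a b, a ≠ b → e₁ ≠ a → e₁ ≠ b → G.star v = {e₁, a, b} → v ∈ G.ends a →
      v ∈ G.ends b → ¬ G.IsBridge a → ¬ G.IsBridge b → a ∈ M → ∃ σ : G.E → ZMod 3,
      (∀ e, ¬ G.IsBridge e → σ e = baseLetter N L e) ∧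
      LocallyColored (fun e => e ∈ N ∧ ¬ G.BridgeIn N e) σ v := by
    intro a b hab h₁a h₁b hst hva hvb hba hbb haM
    have haN : a ∉ N := fun h => ((hN _).1 h).2.2 haM
    have hbN : b ∈ N := (hN _).2 ⟨hbb, hv _ hvb, fun h => hab (hMm _ haM _ h hva hvb)⟩
    have hbN' : G.BridgeIn N b := by
      by_contra h
      obtain ⟨e, he, hne, hve, -⟩ := hother b hbN hvb h
      have : e ∈ G.star v := by simpa [star] using hve
      rw [hst] at this
      simp only [Finset.mem_insert, Finset.mem_singleton] at this
      grind
    refine ⟨fun e => if G.IsBridge e then - baseLetter N L b else baseLetter N L e,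
      fun e he => by simp [he], e₁, a, b, h₁a, h₁b, hab, hst, Or.inl ?_⟩
    simp only [baseLetter, h₁N, haN, hbN, hbN', hb₁, hba, hbb]
    generalize L b = c
    revert c
    simp
    decide
  by_cases h₂M : e₂ ∈ M
  · exact path_end e₂ e₃ h₂₃ h₁₂ h₁₃ hstar hv₂ hv₃ hb₂ hb₃ h₂M
  by_cases h₃M : e₃ ∈ M
  · exact path_end e₃ e₂ h₂₃.symm h₁₃ h₁₂ (by rw [hstar, Finset.pair_comm]) hv₃ hv₂ hb₃ hb₂ h₃M
  exact two_path ((hN _).2 ⟨hb₂, hv _ hv₂, h₂M⟩) ((hN _).2 ⟨hb₃, hv _ hv₃, h₃M⟩)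

/-- Every cubic pseudo-graph has a letter and a prime mark for each edge that are consistent at all
loopless vertices. -/
theorem exists_letters (hG : G.CubicPseudo) :
    ∃ (prime : G.E → Prop) (L : G.E → ZMod 3), ∀ v,
      (∀ e, v ∈ G.ends e → ¬ (G.ends e).IsDiag) → LocallyColored prime L v := by
  obtain ⟨M, hMm, hMc⟩ := exists_matching hG
  obtain ⟨N, hN⟩ : ∃ N : Set G.E,
      ∀ e, e ∈ N ↔ ¬ G.IsBridge e ∧ ¬ (G.ends e).IsDiag ∧ e ∉ M :=
    ⟨{e | ¬ G.IsBridge e ∧ ¬ (G.ends e).IsDiag ∧ e ∉ M}, fun _ => Iff.rfl⟩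
  obtain ⟨L₂, hL₂⟩ := exists_bridge_two_coloring N (by
    intro v
    obtain ⟨e, hve, he⟩ : ∃ e, v ∈ G.ends e ∧ e ∉ N := by
      by_cases hi : G.Inner v
      · obtain ⟨e, he, hve⟩ := hMc v hi
        exact ⟨e, hve, fun h => ((hN e).1 h).2.2 he⟩
      · unfold Inner at hi
        push Not at hi
        obtain ⟨e, hve, he⟩ := hi
        exact ⟨e, hve, fun h => ((hN e).1 h).2.1 (he ((hN e).1 h).1)⟩
    refine Nat.lt_succ_iff.1 (lt_of_lt_of_le (Finset.card_lt_card ?_) (card_star_le hG v))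
    exact Finset.filter_ssubset.2 ⟨e, by simpa [star] using hve, he⟩)
  have hσ : ∀ v, ∃ σ : G.E → ZMod 3, (∀ e, ¬ G.IsBridge e → σ e = baseLetter N L₂ e) ∧
      ((∀ e, v ∈ G.ends e → ¬ (G.ends e).IsDiag) →
        LocallyColored (fun e => e ∈ N ∧ ¬ G.BridgeIn N e) σ v) := by
    intro v
    by_cases hv : ∀ e, v ∈ G.ends e → ¬ (G.ends e).IsDiag
    · obtain ⟨σ, h, h'⟩ := exists_local_letters hG (hMm v) (hMc v) hN
        (hL₂ v) hv
      exact ⟨σ, h, fun _ => h'⟩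
    · exact ⟨baseLetter N L₂, fun _ _ => rfl, fun h => absurd h hv⟩
  choose σ hσ₁ hσ₂ using hσ
  obtain ⟨x, L, hL⟩ := exists_potential Set.univ σ (fun e _ hb u w _ => by
    rw [bridgeIn_univ] at hb
    rw [hσ₁ u e hb, hσ₁ w e hb])
  refine ⟨fun e => e ∈ N ∧ ¬ G.BridgeIn N e, L, fun v hv => ?_⟩
  obtain ⟨e₁, e₂, e₃, h₁₂, h₁₃, h₂₃, hstar, h⟩ := hσ₂ v hv
  have hmem : ∀ e ∈ G.star v, L e = x v + σ v e :=
    fun e he => hL e (Set.mem_univ e) v (by simpa [star] using he)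
  refine ⟨e₁, e₂, e₃, h₁₂, h₁₃, h₂₃, hstar, ?_⟩
  rw [hmem e₁ (by simp [hstar]), hmem e₂ (by simp [hstar]), hmem e₃ (by simp [hstar])]
  simpa using h

end Multigraph

/-- The three bridges `a`, `b`, `c` of `S₄`. -/
def spoke (d : ZMod 3) : S4.E := (![0, 1, 2] : Fin 3 → Fin 6) d

/-- The three loops `a'`, `b'`, `c'` of `S₄`. -/
def rim (d : ZMod 3) : S4.E := (![3, 4, 5] : Fin 3 → Fin 6) d

theorem S4_incMultiset_eq {y : S4.V} {m : Multiset S4.E}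
    (h : ∀ e : S4.E, m.count e = S4.incCount y e) : m = S4.incMultiset y := by
  ext e
  rw [h, Multigraph.incMultiset, Multiset.count_sum']
  simp [Multiset.count_nsmul, Multiset.count_singleton]

theorem exists_incMultiset_spokes {d₁ d₂ d₃ : ZMod 3} (h₁₂ : d₁ ≠ d₂) (h₁₃ : d₁ ≠ d₃)
    (h₂₃ : d₂ ≠ d₃) : ∃ y, {spoke d₁} + ({spoke d₂} + {spoke d₃}) = S4.incMultiset y := by
  refine ⟨(0 : Fin 4), S4_incMultiset_eq ?_⟩
  revert d₁ d₂ d₃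
  decide

theorem exists_incMultiset_rim (d : ZMod 3) :
    ∃ y, {spoke d} + ({rim d} + {rim d}) = S4.incMultiset y := by
  refine ⟨(![1, 2, 3] : Fin 3 → Fin 4) d, S4_incMultiset_eq ?_⟩
  revert d
  decide

/-- every cubic pseudo-graph admits an S₄-coloring: ordinary
edges get one color, loops get two colors, and at each vertex the resulting
multiset of three colors is the incidence multiset of some vertex of S₄
(a loop of S₄ counting twice at its vertex). -/
theorem cubic_pseudograph_admits_S4_coloring (G : Multigraph)
    (hG : G.CubicPseudo) :
    ∃ f : G.E → Multiset S4.E,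
      (∀ e : G.E, ¬ (G.ends e).IsDiag → Multiset.card (f e) = 1) ∧
      (∀ e : G.E, (G.ends e).IsDiag → Multiset.card (f e) = 2) ∧
      (∀ x : G.V, ∃ y : S4.V, (∑ e ∈ G.star x, f e) = S4.incMultiset y) := by
  obtain ⟨prime, L, hL⟩ := Multigraph.exists_letters hG
  set g : G.E → Multiset S4.E := fun e => if prime e then {rim (L e)} else {spoke (L e)} with hg
  have hloop : ∀ e, ∃ m : Multiset S4.E, (G.ends e).IsDiag → Multiset.card m = 2 ∧
      ∀ v ∈ G.ends e, ∃ e₁, e₁ ≠ e ∧ G.star v = {e, e₁} ∧ ¬ (G.ends e₁).IsDiag ∧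
        ∃ y, m + g e₁ = S4.incMultiset y := by
    intro e
    by_cases he : (G.ends e).IsDiag
    swap
    · exact ⟨0, fun h => absurd h he⟩
    obtain ⟨v, hv⟩ : ∃ v, G.ends e = s(v, v) := by
      induction h : G.ends e with
      | _ u w =>
        rw [h, Sym2.mk_isDiag_iff] at he
        exact ⟨w, by rw [he]⟩
    obtain ⟨e₁, hne, hst, hd⟩ := Multigraph.star_of_loop hG (v := v) (by simp [hv]) he
    obtain ⟨y, hy⟩ := exists_incMultiset_rim (L e₁)
    by_cases hp : prime e₁
    · refine ⟨{spoke (L e₁)} + {rim (L e₁)}, fun _ => ⟨by simp, fun w hw => ?_⟩⟩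
      obtain rfl : w = v := by simpa [hv] using hw
      exact ⟨e₁, hne, hst, hd, y, by rw [← hy, hg]; simp only [hp, if_true, add_assoc]⟩
    · refine ⟨{rim (L e₁)} + {rim (L e₁)}, fun _ => ⟨by simp, fun w hw => ?_⟩⟩
      obtain rfl : w = v := by simpa [hv] using hw
      exact ⟨e₁, hne, hst, hd, y, by rw [← hy, hg, add_comm]; simp only [hp, if_false]⟩
  choose m hm using hloop
  refine ⟨fun e => if (G.ends e).IsDiag then m e else g e, fun e he => ?_, fun e he => ?_,
    fun v => ?_⟩
  · simp only [he, if_false, hg]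
    split_ifs <;> simp
  · simpa only [he, if_true] using (hm e he).1
  by_cases hv : ∀ e, v ∈ G.ends e → ¬ (G.ends e).IsDiag
  · rw [Finset.sum_congr rfl fun e he => if_neg (hv e (by simpa [Multigraph.star] using he))]
    obtain ⟨e₁, e₂, e₃, h₁₂, h₁₃, h₂₃, hst, h⟩ := hL v hv
    rw [hst, Finset.sum_insert (by simp [h₁₂, h₁₃]), Finset.sum_pair h₂₃]
    rcases h with ⟨p₁, p₂, p₃, d₁₂, d₁₃, d₂₃⟩ | ⟨p₁, p₂, p₃, d₁₂, d₁₃⟩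
    · simpa only [hg, p₁, p₂, p₃, if_false] using exists_incMultiset_spokes d₁₂ d₁₃ d₂₃
    · simpa only [hg, p₁, p₂, p₃, if_true, if_false, ← d₁₂, ← d₁₃] using exists_incMultiset_rim (L e₁)
  · push Not at hv
    obtain ⟨e, hve, he⟩ := hv
    obtain ⟨e₁, hne, hst, hd, y, hy⟩ := (hm e he).2 v hve
    exact ⟨y, by rw [hst, Finset.sum_pair hne.symm, if_pos he, if_neg hd, hy]⟩
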